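/- Let N ≥ 1, let 0 ≤ a < b, let γ > 0, and let P be the product of N copies of the uniform probability measure on [a,b]. Let M_k(x) be the sum of the k largest coordinates of x ∈ [a,b]^N (M_0 = 0), and define the ordered stopping index k* as the least k ∈ {1,…,N} with M_k ≥ γ, with k* = N if no such k exists. For 0 ≤ k ≤ N−1 and 0 ≤ j ≤ k define g_{k,j}(s) = max( max(min((γ − ks)/(b − s), k), 0) − j, 0 ) for s ∈ [a,b). Then the expected number of transmissions satisfies the upper bound E[k*] ≤ Σ_{k=0}^{N-1} [N! / ((N−k−1)! (k!)²)] (1/(b−a))^N Σ_{j=0}^{k} (−1)^j C(k,j) ∫_a^b g_{k,j}(s)^k (s − a)^{N−k−1} (b − s)^k ds (the upper bound of Theorem 1, in integral form). -/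

import Mathlib

open MeasureTheory
open scoped Classical

/-- The uniform probability measure on the interval `[a,b]`. -/
noncomputable def unif (a b : ℝ) : Measure ℝ :=
  (volume (Set.Icc a b))⁻¹ • volume.restrict (Set.Icc a b)

/-- `sumKLargest N k x` is the sum of the `k` largest coordinates of `x : Fin N → ℝ`
(counted with multiplicity); it is `0` for `k = 0`. -/
noncomputable def sumKLargest (N k : ℕ) (x : Fin N → ℝ) : ℝ :=
  (((List.ofFn x).insertionSort (· ≥ ·)).take k).sum


instance unif_prob (a b : ℝ) [Fact (a < b)] : IsProbabilityMeasure (unif a b) := by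
  have h : a < b := Fact.out
  constructor
  simp only [unif, Measure.smul_apply, Measure.restrict_apply_univ, smul_eq_mul]
  apply ENNReal.inv_mul_cancel <;> simp [h]

lemma unif_integral (a b : ℝ) (h : a < b) (f : ℝ → ℝ) :
    ∫ x, f x ∂(unif a b) = (1 / (b - a)) * ∫ x in Set.Icc a b, f x := by
  rw [unif, integral_smul_measure, smul_eq_mul]
  congr 1
  simp [ENNReal.toReal_ofReal, h.le]

lemma exists_sorted_split (N k : ℕ) (hk : k < N) (x : Fin N → ℝ) :
    ∃ i : Fin N, ∃ S ∈ (Finset.univ.erase i).powersetCard k,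
      (∀ j ∈ S, x i ≤ x j) ∧ (∀ j, j ∉ S → j ≠ i → x j ≤ x i) ∧
      ∑ j ∈ S, x j = sumKLargest N k x := by
  set τ : Equiv.Perm (Fin N) := Fin.revPerm.trans (Tuple.sort x) with hτ
  have hanti : Antitone (x ∘ τ) := by
    intro p q hpq
    have := Tuple.monotone_sort x (Fin.rev_le_rev.mpr hpq)
    simpa [hτ] using this
  have hl : (List.ofFn x).insertionSort (· ≥ ·) = List.ofFn (x ∘ τ) := by
    apply List.Perm.eq_of_sortedGE (List.sortedGE_insertionSort)
    · exact hanti.sortedGE_ofFn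
    · exact (List.perm_insertionSort _ _).trans (Equiv.Perm.ofFn_comp_perm τ x).symm
  refine ⟨τ ⟨k, hk⟩, (Finset.univ.filter (fun j : Fin N => j.val < k)).image τ, ?_, ?_, ?_, ?_⟩
  · rw [Finset.mem_powersetCard]
    constructor
    · intro j hj
      simp only [Finset.mem_image, Finset.mem_filter, Finset.mem_univ, true_and] at hj
      obtain ⟨p, hp, rfl⟩ := hj
      simp only [Finset.mem_erase, Finset.mem_univ, and_true, ne_eq, EmbeddingLike.apply_eq_iff_eq]
      rintro rfl
      simp at hp
    · rw [Finset.card_image_of_injective _ τ.injective]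
      simp [Fin.card_filter_val_lt, hk.le]
  · intro j hj
    simp only [Finset.mem_image, Finset.mem_filter, Finset.mem_univ, true_and] at hj
    obtain ⟨p, hp, rfl⟩ := hj
    exact hanti (show p ≤ ⟨k, hk⟩ from hp.le)
  · intro j hj _
    obtain ⟨p, rfl⟩ := τ.surjective j
    have : ¬ p.val < k := by
      intro hp
      apply hj
      exact Finset.mem_image_of_mem _ (by simpa using hp)
    exact hanti (show ⟨k, hk⟩ ≤ p from not_lt.mp this)
  · rw [sumKLargest, hl, List.sum_take_ofFn, Finset.sum_image (fun _ _ _ _ h => τ.injective h)]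
    rfl

def glue {k m N : ℕ} (e : Unit ⊕ (Fin k ⊕ Fin m) ≃ Fin N) (p : ℝ × (Fin k → ℝ) × (Fin m → ℝ)) :
    Fin N → ℝ := fun j => Sum.elim (fun _ => p.1) (Sum.elim p.2.1 p.2.2) (e.symm j)

lemma glue_mp {k m N : ℕ} (e : Unit ⊕ (Fin k ⊕ Fin m) ≃ Fin N) (ν : Measure ℝ)
    [IsProbabilityMeasure ν] :
    MeasurePreserving (glue e)
      (ν.prod ((Measure.pi fun _ : Fin k => ν).prod (Measure.pi fun _ : Fin m => ν)))
      (Measure.pi fun _ : Fin N => ν) := by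
  have hm : Measurable (glue e) := by
    rw [measurable_pi_iff]
    intro j
    unfold glue
    rcases e.symm j with _ | j | j <;> simp <;> fun_prop
  refine ⟨hm, (Measure.pi_eq fun s hs => ?_).symm⟩
  rw [Measure.map_apply hm (MeasurableSet.univ_pi hs)]
  have : glue e ⁻¹' (Set.univ.pi s) = s (e (.inl ())) ×ˢ
      ((Set.univ.pi fun j => s (e (.inr (.inl j)))) ×ˢ
        (Set.univ.pi fun j => s (e (.inr (.inr j))))) := by
    ext p
    simp only [Set.mem_preimage, Set.mem_pi, Set.mem_univ, true_imp_iff, Set.mem_prod]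
    rw [← e.forall_congr_right]
    simp [glue]
    intros
    exact ⟨fun h => h (), fun h _ => h⟩
  rw [this, Measure.prod_prod, Measure.prod_prod, Measure.pi_pi, Measure.pi_pi,
    ← e.prod_comp]
  simp

lemma real_prod_eq {α β : Type*} [MeasurableSpace α] [MeasurableSpace β] (μ : Measure α)
    (ρ : Measure β) [IsProbabilityMeasure μ] [IsProbabilityMeasure ρ] (A : Set (α × β))
    (hA : MeasurableSet A) :
    (μ.prod ρ).real A = ∫ x, ρ.real (Prod.mk x ⁻¹' A) ∂μ := by
  rw [Measure.real, Measure.prod_apply hA]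
  unfold Measure.real
  rw [integral_toReal]
  · exact (measurable_measure_prodMk_left hA).aemeasurable
  · exact Filter.Eventually.of_forall fun x => measure_lt_top _ _

lemma exists_equiv {N k : ℕ} (i : Fin N) (S : Finset (Fin N))
    (hS : S ∈ (Finset.univ.erase i).powersetCard k) :
    ∃ e : Unit ⊕ (Fin k ⊕ Fin (N - k - 1)) ≃ Fin N, e (.inl ()) = i ∧
      (∀ j, e (.inr (.inl j)) ∈ S) ∧ (∀ j, e (.inr (.inr j)) ∉ S ∧ e (.inr (.inr j)) ≠ i) ∧
      ∀ f : Fin N → ℝ, ∑ j ∈ S, f j = ∑ j, f (e (.inr (.inl j))) := by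
  rw [Finset.mem_powersetCard] at hS
  obtain ⟨h1, h2⟩ := hS
  have hi : i ∉ S := fun h => by simpa using h1 h
  set T := (insert i S)ᶜ with hT
  have hTc : T.card = N - k - 1 := by
    rw [hT, Finset.card_compl, Finset.card_insert_of_notMem hi, h2]; simp; omega
  let eS := S.equivFinOfCardEq h2
  let eT := T.equivFinOfCardEq hTc
  let f : Unit ⊕ (Fin k ⊕ Fin (N - k - 1)) → Fin N :=
    Sum.elim (fun _ => i) (Sum.elim (fun j => eS.symm j) (fun j => eT.symm j))
  have hTm : ∀ j, (eT.symm j : Fin N) ∉ S ∧ (eT.symm j : Fin N) ≠ i := by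
    intro j
    have h : ∀ q ∈ T, q ∉ S ∧ q ≠ i := by
      intro q hq
      rw [hT, Finset.mem_compl, Finset.mem_insert] at hq
      tauto
    exact h _ (eT.symm j).2
  have hSm : ∀ j, (eS.symm j : Fin N) ∈ S := fun j => (eS.symm j).2
  have hsurj : Function.Surjective f := by
    intro j
    by_cases hj : j = i
    · exact ⟨.inl (), hj.symm⟩
    by_cases hjS : j ∈ S
    · exact ⟨.inr (.inl (eS ⟨j, hjS⟩)), by simp [f]⟩
    · exact ⟨.inr (.inr (eT ⟨j, by simp [hT, hj, hjS]⟩)), by simp [f]⟩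
  have hinj : Function.Injective f := by
    rintro (_ | p | p) (_ | q | q) h <;> simp only [f, Sum.elim_inl, Sum.elim_inr] at h
    · rfl
    · exact absurd (h ▸ hSm q) hi
    · exact absurd h.symm (hTm q).2
    · exact absurd (h ▸ hSm p) hi
    · rw [eS.symm.injective (Subtype.ext h)]
    · exact absurd (h ▸ hSm p) (hTm q).1
    · exact absurd h (hTm p).2
    · exact absurd (h ▸ hSm q) (hTm p).1
    · rw [eT.symm.injective (Subtype.ext h)]
  refine ⟨Equiv.ofBijective f ⟨hinj, hsurj⟩, rfl, hSm, hTm, fun u => ?_⟩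
  rw [← Finset.sum_coe_sort, ← eS.symm.sum_comp]
  rfl

lemma pascal_sum (k : ℕ) (φ : ℕ → ℝ) :
    ∑ j ∈ Finset.range (k + 1), (-1 : ℝ) ^ j * (k.choose j : ℝ) * (φ j - φ (j + 1)) =
      ∑ j ∈ Finset.range (k + 2), (-1 : ℝ) ^ j * ((k + 1).choose j : ℝ) * φ j := by
  rw [Finset.sum_range_succ' _ (k + 1)]
  simp only [Nat.choose_succ_succ, mul_sub, Finset.sum_sub_distrib]
  have h : ∑ j ∈ Finset.range (k + 1), (-1 : ℝ) ^ (j + 1) *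
      ((k.choose j + k.choose (j + 1) : ℕ) : ℝ) * φ (j + 1) =
      - ∑ j ∈ Finset.range (k + 1), (-1 : ℝ) ^ j * (k.choose j : ℝ) * φ (j + 1) +
      ∑ j ∈ Finset.range (k + 1), (-1 : ℝ) ^ (j + 1) * (k.choose (j + 1) : ℝ) * φ (j + 1) := by
    rw [← Finset.sum_neg_distrib, ← Finset.sum_add_distrib]
    refine Finset.sum_congr rfl fun j _ => ?_
    push_cast; ring
  have h2 : ∑ j ∈ Finset.range (k + 1), (-1 : ℝ) ^ j * (k.choose j : ℝ) * φ j =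
      ∑ j ∈ Finset.range (k + 1), (-1 : ℝ) ^ (j + 1) * (k.choose (j + 1) : ℝ) * φ (j + 1)
        + φ 0 := by
    have := Finset.sum_range_succ' (fun j => (-1 : ℝ) ^ j * (k.choose j : ℝ) * φ j) (k + 1)
    rw [Finset.sum_range_succ] at this
    simpa using this
  rw [h, h2]
  simp
  ring

lemma hasDerivAt_maxpow (n : ℕ) (x : ℝ) :
    HasDerivAt (fun x : ℝ => (max x 0) ^ (n + 2)) ((n + 2 : ℝ) * (max x 0) ^ (n + 1)) x := by
  rcases lt_trichotomy x 0 with h | h | h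
  · have : (fun x : ℝ => (max x 0) ^ (n + 2)) =ᶠ[nhds x] fun _ => 0 := by
      filter_upwards [Iio_mem_nhds h] with y hy
      simp [max_eq_right (le_of_lt (Set.mem_Iio.mp hy))]
    rw [max_eq_right h.le]
    simpa using (hasDerivAt_const x (0 : ℝ)).congr_of_eventuallyEq this
  · subst h
    have h1 : HasDerivWithinAt (fun x : ℝ => (max x 0) ^ (n + 2)) 0 (Set.Iic 0) 0 :=
      (hasDerivWithinAt_const (0 : ℝ) _ (0 : ℝ)).congr
        (fun y hy => by simp [max_eq_right (show y ≤ 0 from hy)]) (by simp)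
    have h2 : HasDerivWithinAt (fun x : ℝ => (max x 0) ^ (n + 2)) 0 (Set.Ici 0) 0 := by
      have := (hasDerivAt_pow (n + 2) (0 : ℝ)).hasDerivWithinAt (s := Set.Ici 0)
      refine (this.congr (fun y hy => by simp [max_eq_left (show 0 ≤ y from hy)])
        (by simp)).congr_deriv (by simp)
    have h3 := h1.union h2
    rw [Set.Iic_union_Ici, hasDerivWithinAt_univ] at h3
    simpa using h3
  · have : (fun x : ℝ => (max x 0) ^ (n + 2)) =ᶠ[nhds x] fun x => x ^ (n + 2) := by
      filter_upwards [Ioi_mem_nhds h] with y hy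
      simp [max_eq_left (le_of_lt (Set.mem_Ioi.mp hy))]
    rw [max_eq_left h.le]
    simpa using (hasDerivAt_pow (n + 2) x).congr_of_eventuallyEq this

lemma integral_maxpow (n : ℕ) (s b c : ℝ) :
    ∫ u in s..b, (max (c - u) 0) ^ (n + 1) =
      ((max (c - s) 0) ^ (n + 2) - (max (c - b) 0) ^ (n + 2)) / (n + 2 : ℝ) := by
  have hd : ∀ u ∈ Set.uIcc s b, HasDerivAt
      (fun u => - ((max (c - u) 0) ^ (n + 2)) / (n + 2 : ℝ)) ((max (c - u) 0) ^ (n + 1)) u := by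
    intro u _
    have h1 := (hasDerivAt_maxpow n (c - u)).comp u ((hasDerivAt_id u).const_sub c)
    have h2 := (h1.neg).div_const (n + 2 : ℝ)
    refine h2.congr_deriv ?_
    have : (n + 2 : ℝ) ≠ 0 := by positivity
    field_simp
  rw [intervalIntegral.integral_eq_sub_of_hasDerivAt hd]
  · ring
  · apply Continuous.intervalIntegrable
    fun_prop

lemma base_integral (s b T : ℝ) (hsb : s ≤ b) :
    ∫ u in Set.Icc s b, (if u ≤ T then (1 : ℝ) else 0) = max (T - s) 0 - max (T - b) 0 := by
  have : (fun u => if u ≤ T then (1 : ℝ) else 0) = (Set.Iic T).indicator (fun _ => 1) := by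
    ext u; simp [Set.indicator_apply]
  rw [this, integral_indicator measurableSet_Iic, Measure.restrict_restrict measurableSet_Iic]
  have : Set.Iic T ∩ Set.Icc s b = Set.Icc s (min b T) := by
    ext u; simp; tauto
  rw [this]
  simp [Measure.real, ENNReal.toReal_ofReal']
  rcases le_total T s with h | h <;> rcases le_total T b with h' | h' <;>
    simp [h, h'] <;> grind

def Ev (k : ℕ) (s T : ℝ) : Set (Fin k → ℝ) := {y | (∀ j, s ≤ y j) ∧ ∑ j, y j ≤ T}

lemma Ev_meas (k : ℕ) (s T : ℝ) : MeasurableSet (Ev k s T) := by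
  unfold Ev
  measurability

lemma Ev_step (a b s : ℝ) [Fact (a < b)] (has : a ≤ s) (k : ℕ) (T : ℝ) :
    (Measure.pi fun _ : Fin (k + 1) => unif a b).real (Ev (k + 1) s T) =
      (1 / (b - a)) * ∫ u in Set.Icc s b,
        (Measure.pi fun _ : Fin k => unif a b).real (Ev k s (T - u)) := by
  have h : a < b := Fact.out
  have hmp := measurePreserving_piFinSuccAbove (fun _ : Fin (k + 1) => unif a b) 0
  set A : Set (ℝ × (Fin k → ℝ)) := {p | s ≤ p.1 ∧ (∀ j, s ≤ p.2 j) ∧ p.1 + ∑ j, p.2 j ≤ T} with hA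
  have hAm : MeasurableSet A := by
    rw [hA]; measurability
  have hpre : Ev (k + 1) s T = (MeasurableEquiv.piFinSuccAbove (fun _ => ℝ) 0) ⁻¹' A := by
    ext y
    simp [Ev, hA, MeasurableEquiv.piFinSuccAbove, Fin.forall_fin_succ, Fin.sum_univ_succ,
      Fin.insertNthEquiv, Fin.tail, and_assoc]
  rw [hpre, hmp.measureReal_preimage hAm.nullMeasurableSet, real_prod_eq _ _ _ hAm,
    unif_integral a b h]
  congr 1
  have : ∀ u, (Measure.pi fun _ : Fin k => unif a b).real (Prod.mk u ⁻¹' A) =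
      (Set.Ici s).indicator
        (fun u => (Measure.pi fun _ : Fin k => unif a b).real (Ev k s (T - u))) u := by
    intro u
    by_cases hu : s ≤ u
    · rw [Set.indicator_of_mem (show u ∈ Set.Ici s from hu)]
      congr 1
      ext y
      simp [hA, Ev, hu, le_sub_iff_add_le']
    · rw [Set.indicator_of_notMem (show u ∉ Set.Ici s from hu)]
      have : Prod.mk u ⁻¹' A = ∅ := by
        ext y; simp [hA, hu]
      rw [this]; simp
  simp_rw [this]
  rw [integral_indicator measurableSet_Ici, Measure.restrict_restrict measurableSet_Ici]
  congr 2
  ext u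
  simp
  intro h1 _
  linarith

lemma irwin_hall (a b s : ℝ) [Fact (a < b)] (has : a ≤ s) (hsb : s ≤ b) (k : ℕ) (T : ℝ) :
    (Measure.pi fun _ : Fin (k + 1) => unif a b).real (Ev (k + 1) s T) =
      (1 / (b - a)) ^ (k + 1) * (1 / ((k + 1).factorial : ℝ)) *
        ∑ j ∈ Finset.range (k + 2), (-1 : ℝ) ^ j * ((k + 1).choose j : ℝ) *
          (max (T - (k + 1 : ℝ) * s - j * (b - s)) 0) ^ (k + 1) := by
  induction k generalizing T with
  | zero =>
    rw [Ev_step a b s has]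
    have : ∀ u, (Measure.pi fun _ : Fin 0 => unif a b).real (Ev 0 s (T - u)) =
        if u ≤ T then (1 : ℝ) else 0 := by
      intro u
      split_ifs with hu
      · have : Ev 0 s (T - u) = Set.univ := by
          ext y; simp [Ev, hu]
        rw [this]; simp
      · have : Ev 0 s (T - u) = ∅ := by
          ext y; simpa [Ev] using hu
        rw [this]; simp
    simp_rw [this]
    rw [base_integral s b T hsb]
    simp [Finset.sum_range_succ]
    left; ring_nf
  | succ k ih =>
    rw [Ev_step a b s has]
    simp_rw [ih]
    rw [integral_const_mul, integral_Icc_eq_integral_Ioc, ← intervalIntegral.integral_of_le hsb,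
      intervalIntegral.integral_finsetSum]
    · have hterm : ∀ j : ℕ, ∫ u in s..b, (-1 : ℝ) ^ j * ((k + 1).choose j : ℝ) *
          (max (T - u - (k + 1 : ℝ) * s - j * (b - s)) 0) ^ (k + 1) =
          (1 / (k + 2 : ℝ)) * ((-1 : ℝ) ^ j * ((k + 1).choose j : ℝ) *
          ((fun j : ℕ => (max (T - (k + 2 : ℝ) * s - j * (b - s)) 0) ^ (k + 2)) j -
          (fun j : ℕ => (max (T - (k + 2 : ℝ) * s - j * (b - s)) 0) ^ (k + 2)) (j + 1))) := by
        intro j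
        rw [intervalIntegral.integral_const_mul]
        have : ∀ u, T - u - (k + 1 : ℝ) * s - j * (b - s) =
          (T - (k + 1 : ℝ) * s - j * (b - s)) - u := fun u => by ring
        simp_rw [this]
        rw [integral_maxpow]
        have e1 : T - (k + 1 : ℝ) * s - j * (b - s) - s = T - (k + 2 : ℝ) * s - j * (b - s) := by
          ring
        have e2 : T - (k + 1 : ℝ) * s - j * (b - s) - b =
            T - (k + 2 : ℝ) * s - ((j + 1 : ℕ) : ℝ) * (b - s) := by
          push_cast; ring
        rw [e1, e2]
        ring
      simp_rw [hterm]
      rw [← Finset.mul_sum, pascal_sum]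
      rw [Nat.factorial_succ (k + 1)]
      push_cast
      have e3 : (k + 1 + 1 : ℝ) = k + 2 := by ring
      rw [e3]
      have h4 : (k + 2 : ℝ) ≠ 0 := by positivity
      have h5 : ((k + 1).factorial : ℝ) ≠ 0 := by positivity
      have h6 : b - a ≠ 0 := by
        have : a < b := Fact.out
        linarith
      have h7 : 1 / ((k + 2 : ℝ) * ((k + 1).factorial : ℝ)) =
          (1 / (k + 2 : ℝ)) * (1 / ((k + 1).factorial : ℝ)) := by
        field_simp
      rw [h7]
      ring
    · intro j _
      apply Continuous.intervalIntegrable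
      fun_prop

lemma Ev_bound (a b s γ : ℝ) [Fact (a < b)] (has : a ≤ s) (hsb : s < b) (k : ℕ) :
    (Measure.pi fun _ : Fin k => unif a b).real (Ev k s γ) ≤
      (1 / (b - a)) ^ k * (1 / (k.factorial : ℝ)) * ((b - s) ^ k *
        ∑ j ∈ Finset.range (k + 1), (-1 : ℝ) ^ j * (k.choose j : ℝ) *
          (max (max (min ((γ - k * s) / (b - s)) (k : ℝ)) 0 - j) 0) ^ k) := by
  cases k with
  | zero =>
    simp
  | succ k =>
    have hL : 0 < b - s := by linarith
    set t := (γ - (k + 1 : ℕ) * s) / (b - s) with ht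
    set t' := max (min t ((k + 1 : ℕ) : ℝ)) 0 with ht'
    set T' := (k + 1 : ℝ) * s + (b - s) * t' with hT'
    have hmono : (Measure.pi fun _ : Fin (k + 1) => unif a b).real (Ev (k + 1) s γ) ≤
        (Measure.pi fun _ : Fin (k + 1) => unif a b).real (Ev (k + 1) s T') := by
      by_cases hc : t ≤ ((k + 1 : ℕ) : ℝ)
      · apply measureReal_mono
        · rintro y ⟨h1, h2⟩
          refine ⟨h1, h2.trans ?_⟩
          have h3 : t ≤ t' := by
            rw [ht', min_eq_left hc]; exact le_max_left _ _
          have h4 : (b - s) * t = γ - (k + 1 : ℕ) * s := by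
            rw [ht]; field_simp
          have h5 := mul_le_mul_of_nonneg_left h3 hL.le
          rw [hT']
          push_cast at h4
          linarith
        · exact measure_ne_top _ _
      · push Not at hc
        have h3 : t' = (k + 1 : ℝ) := by
          rw [ht', min_eq_right hc.le, max_eq_left (by positivity)]; push_cast; rfl
        have hae : ∀ᵐ y ∂(Measure.pi fun _ : Fin (k + 1) => unif a b), ∀ j, y j ≤ b := by
          rw [ae_all_iff]
          intro j
          have h1 : ∀ᵐ u ∂(unif a b), u ≤ b := by
            unfold unif
            apply Measure.ae_smul_measure
            filter_upwards [ae_restrict_mem measurableSet_Icc] with u hu using hu.2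
          exact (measurePreserving_eval (fun _ : Fin (k + 1) => unif a b)
            j).quasiMeasurePreserving.ae h1
        unfold Measure.real
        apply ENNReal.toReal_mono (measure_ne_top _ _)
        apply measure_mono_ae
        filter_upwards [hae] with y hy h1
        refine ⟨h1.1, ?_⟩
        have h6 : ∑ j, y j ≤ ∑ _j : Fin (k + 1), b := Finset.sum_le_sum fun j _ => hy j
        simp at h6
        rw [hT', h3]
        linarith
    refine hmono.trans (le_of_eq ?_)
    rw [irwin_hall a b s has hsb.le]
    congr 1
    rw [Finset.mul_sum]
    refine Finset.sum_congr rfl fun j _ => ?_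
    have : max (T' - (k + 1 : ℝ) * s - j * (b - s)) 0 = (b - s) * max (t' - j) 0 := by
      rw [mul_max_of_nonneg _ _ hL.le, hT']
      congr 1 <;> ring
    rw [this, mul_pow]
    ring

lemma Iic_real (a b s : ℝ) [Fact (a < b)] (has : a ≤ s) (hsb : s ≤ b) (m : ℕ) :
    (Measure.pi fun _ : Fin m => unif a b).real {z | ∀ j, z j ≤ s} =
      ((1 / (b - a)) * (s - a)) ^ m := by
  have h : a < b := Fact.out
  have : {z : Fin m → ℝ | ∀ j, z j ≤ s} = Set.univ.pi fun _ => Set.Iic s := by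
    ext z
    simp only [Set.mem_pi, Set.mem_univ, true_imp_iff, Set.mem_Iic]
    rfl
  rw [this, Measure.real, Measure.pi_pi]
  simp only [Finset.prod_const, Finset.card_univ, Fintype.card_fin, ENNReal.toReal_pow]
  congr 1
  rw [unif, Measure.smul_apply, Measure.restrict_apply measurableSet_Iic]
  have : Set.Iic s ∩ Set.Icc a b = Set.Icc a s := by
    ext u; simp
    constructor
    · rintro ⟨h1, h2, h3⟩; exact ⟨h2, h1⟩
    · rintro ⟨h1, h2⟩; exact ⟨h2, h1, h2.trans hsb⟩
  rw [this]
  simp [h.le, has]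

def AS (N : ℕ) (γ : ℝ) (i : Fin N) (S : Finset (Fin N)) : Set (Fin N → ℝ) :=
  {x | (∀ j ∈ S, x i ≤ x j) ∧ (∀ j, j ∉ S → j ≠ i → x j ≤ x i) ∧ ∑ j ∈ S, x j ≤ γ}

lemma AS_meas (N : ℕ) (γ : ℝ) (i : Fin N) (S : Finset (Fin N)) : MeasurableSet (AS N γ i S) := by
  unfold AS
  simp only [Set.setOf_and, Set.setOf_forall]
  refine MeasurableSet.inter ?_ (MeasurableSet.inter ?_ ?_)
  · exact MeasurableSet.iInter fun j => MeasurableSet.iInter fun _ =>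
      measurableSet_le (by fun_prop) (by fun_prop)
  · exact MeasurableSet.iInter fun j => MeasurableSet.iInter fun _ => MeasurableSet.iInter fun _ =>
      measurableSet_le (by fun_prop) (by fun_prop)
  · exact measurableSet_le (by fun_prop) (by fun_prop)

lemma AS_real (N k : ℕ) (γ a b : ℝ) [Fact (a < b)] (i : Fin N) (S : Finset (Fin N))
    (hS : S ∈ (Finset.univ.erase i).powersetCard k) :
    (Measure.pi fun _ : Fin N => unif a b).real (AS N γ i S) =
      (1 / (b - a)) * ∫ s in Set.Icc a b,
        (Measure.pi fun _ : Fin k => unif a b).real (Ev k s γ) *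
        (Measure.pi fun _ : Fin (N - k - 1) => unif a b).real {z | ∀ j, z j ≤ s} := by
  obtain ⟨e, h1, h2, h3, h4⟩ := exists_equiv i S hS
  have hmp := glue_mp e (unif a b)
  rw [← hmp.measureReal_preimage (AS_meas N γ i S).nullMeasurableSet,
    real_prod_eq _ _ _ (hmp.measurable (AS_meas N γ i S)), unif_integral a b Fact.out]
  congr 1
  congr 1
  ext s
  rw [← measureReal_prod_prod]
  congr 1
  ext p
  have q1 : ∀ j, glue e (s, p) (e j) = Sum.elim (fun _ => s) (Sum.elim p.1 p.2) j := by
    intro j; simp [glue]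
  simp only [Set.mem_preimage, AS, Set.mem_setOf_eq, Set.mem_prod, Ev, h4]
  rw [← h1]
  simp only [q1, Sum.elim_inl, Sum.elim_inr]
  constructor
  · rintro ⟨u1, u2, u3⟩
    refine ⟨⟨fun j => ?_, u3⟩, fun j => ?_⟩
    · simpa [q1] using u1 _ (h2 j)
    · have := u2 _ (h3 j).1 (by rw [h1]; exact (h3 j).2)
      simpa [q1] using this
  · rintro ⟨⟨u1, u3⟩, u2⟩
    refine ⟨fun j hj => ?_, fun j hj hji => ?_, u3⟩
    · obtain ⟨j, rfl⟩ := e.surjective j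
      rw [q1]
      rcases j with j | j | j
      · simp
      · simpa using u1 j
      · exact absurd hj (h3 j).1
    · obtain ⟨j, rfl⟩ := e.surjective j
      rw [q1]
      rcases j with j | j | j
      · simp
      · exact absurd (h2 j) hj
      · simpa using u2 j

lemma g_integrable (a b γ : ℝ) (k j m : ℕ) :
    IntegrableOn (fun s => (max (max (min ((γ - k * s) / (b - s)) (k : ℝ)) 0 - j) 0) ^ k *
      (s - a) ^ m * (b - s) ^ k) (Set.Icc a b) := by
  refine Integrable.of_bound (C := (k : ℝ) ^ k * (b - a) ^ m * (b - a) ^ k) ?_ ?_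
  · apply Measurable.aestronglyMeasurable
    fun_prop
  · filter_upwards [ae_restrict_mem measurableSet_Icc] with s hs
    have hsa : 0 ≤ s - a := by linarith [hs.1]
    have hsb : 0 ≤ b - s := by linarith [hs.2]
    have hg0 : 0 ≤ max (max (min ((γ - k * s) / (b - s)) (k : ℝ)) 0 - j) 0 := le_max_right _ _
    have hg1 : max (max (min ((γ - k * s) / (b - s)) (k : ℝ)) 0 - j) 0 ≤ k := by
      have : (0 : ℝ) ≤ j := by positivity
      have hk : (0 : ℝ) ≤ k := by positivity
      refine max_le ?_ hk
      have := max_le (min_le_right ((γ - k * s) / (b - s)) (k : ℝ)) hk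
      linarith
    rw [Real.norm_of_nonneg (by positivity)]
    have hba : 0 ≤ b - a := by linarith
    gcongr
    · exact hs.2
    · exact hs.1

lemma AS_bound (N k : ℕ) (hk : k < N) (γ a b : ℝ) [Fact (a < b)] (i : Fin N) (S : Finset (Fin N))
    (hS : S ∈ (Finset.univ.erase i).powersetCard k) :
    (Measure.pi fun _ : Fin N => unif a b).real (AS N γ i S) ≤
      (1 / (k.factorial : ℝ)) * (1 / (b - a)) ^ N *
        ∑ j ∈ Finset.range (k + 1), (-1 : ℝ) ^ j * (k.choose j : ℝ) *
          ∫ s in Set.Icc a b, (max (max (min ((γ - k * s) / (b - s)) (k : ℝ)) 0 - j) 0) ^ k *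
            (s - a) ^ (N - k - 1) * (b - s) ^ k := by
  have h : a < b := Fact.out
  have hba : 0 ≤ 1 / (b - a) := by
    have : 0 < b - a := by linarith
    positivity
  rw [AS_real N k γ a b i S hS]
  have hint : ∀ j ∈ Finset.range (k + 1), IntegrableOn (fun s => (-1 : ℝ) ^ j * (k.choose j : ℝ) *
      ((max (max (min ((γ - k * s) / (b - s)) (k : ℝ)) 0 - j) 0) ^ k *
            (s - a) ^ (N - k - 1) * (b - s) ^ k)) (Set.Icc a b) := fun j _ =>
    (g_integrable a b γ k j (N - k - 1)).const_mul _
  simp_rw [← integral_const_mul]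
  rw [← integral_finsetSum _ hint, ← integral_const_mul]
  refine integral_mono_of_nonneg ?_ ?_ ?_
  · exact Filter.Eventually.of_forall fun s => by
      simp only [Pi.zero_apply]
      have := measureReal_nonneg (μ := Measure.pi fun _ : Fin k => unif a b) (s := Ev k s γ)
      have := measureReal_nonneg (μ := Measure.pi fun _ : Fin (N - k - 1) => unif a b)
        (s := {z | ∀ j, z j ≤ s})
      positivity
  · exact (integrable_finsetSum _ hint).const_mul _
  · have hne : ∀ᵐ s ∂(volume.restrict (Set.Icc a b)), s ≠ b :=
      ae_restrict_of_ae (by simp [ae_iff])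
    filter_upwards [ae_restrict_mem measurableSet_Icc, hne] with s hs hsb
    have hsb' : s < b := lt_of_le_of_ne hs.2 hsb
    have hsa : 0 ≤ s - a := by linarith [hs.1]
    rw [Iic_real a b s hs.1 hs.2]
    have hB := Ev_bound a b s γ hs.1 hsb' k
    calc _ ≤ 1 / (b - a) * (((1 / (b - a)) ^ k * (1 / (k.factorial : ℝ)) * ((b - s) ^ k *
        ∑ j ∈ Finset.range (k + 1), (-1 : ℝ) ^ j * (k.choose j : ℝ) *
          (max (max (min ((γ - k * s) / (b - s)) (k : ℝ)) 0 - j) 0) ^ k)) *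
          (1 / (b - a) * (s - a)) ^ (N - k - 1)) := by
          gcongr
      _ = _ := by
          have hN : (1 / (b - a)) ^ N =
              (1 / (b - a)) * (1 / (b - a)) ^ k * (1 / (b - a)) ^ (N - k - 1) := by
            rw [← pow_succ', ← pow_add]; congr 1; omega
          rw [hN, mul_pow, Finset.mul_sum, Finset.mul_sum, Finset.mul_sum, Finset.sum_mul,
            Finset.mul_sum]
          refine Finset.sum_congr rfl fun j _ => ?_
          ring

lemma count_eq (N k : ℕ) (hk : k < N) :
    ((N * (N - 1).choose k : ℕ) : ℝ) * (1 / (k.factorial : ℝ)) =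
      (N.factorial : ℝ) / (((N - k - 1).factorial : ℝ) * ((k.factorial : ℝ)) ^ 2) := by
  obtain ⟨n, rfl⟩ : ∃ n, N = n + 1 := ⟨N - 1, by omega⟩
  have h := Nat.choose_mul_factorial_mul_factorial (show k ≤ n by omega)
  have e : n + 1 - k - 1 = n - k := by omega
  rw [e, Nat.factorial_succ, ← h]
  have h1 : (k.factorial : ℝ) ≠ 0 := by positivity
  have h2 : ((n - k).factorial : ℝ) ≠ 0 := by positivity
  push_cast
  field_simp

lemma kstar_le (N : ℕ) (γ : ℝ) (hγ : 0 < γ) (x : Fin N → ℝ) (K : ℕ)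
    (hk : K = if ∃ k, (1 ≤ k ∧ k ≤ N) ∧ γ ≤ sumKLargest N k x
      then sInf {k | (1 ≤ k ∧ k ≤ N) ∧ γ ≤ sumKLargest N k x}
      else N) :
    (K : ℝ) ≤ ∑ k ∈ Finset.range N, ∑ i : Fin N, ∑ S ∈ (Finset.univ.erase i).powersetCard k,
      (AS N γ i S).indicator (fun _ => (1 : ℝ)) x := by
  have hKN : K ≤ N := by
    rw [hk]
    split_ifs with hex
    · exact (Nat.sInf_mem hex).1.2
    · exact le_rfl
  have hM : ∀ k < K, sumKLargest N k x ≤ γ := by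
    intro k hkK
    rcases Nat.eq_zero_or_pos k with rfl | hpos
    · simpa [sumKLargest] using hγ.le
    by_contra! hc
    have hmem : (1 ≤ k ∧ k ≤ N) ∧ γ ≤ sumKLargest N k x := ⟨⟨hpos, by omega⟩, hc.le⟩
    rw [if_pos ⟨k, hmem⟩] at hk
    have : K ≤ k := hk ▸ Nat.sInf_le hmem
    omega
  have hnn : ∀ i S, 0 ≤ (AS N γ i S).indicator (fun _ => (1 : ℝ)) x := fun i S =>
    Set.indicator_nonneg (fun _ _ => zero_le_one) _
  calc (K : ℝ) = ∑ k ∈ Finset.range K, (1 : ℝ) := by simp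
    _ ≤ ∑ k ∈ Finset.range K, ∑ i : Fin N, ∑ S ∈ (Finset.univ.erase i).powersetCard k,
      (AS N γ i S).indicator (fun _ => (1 : ℝ)) x := by
        refine Finset.sum_le_sum fun k hkK => ?_
        rw [Finset.mem_range] at hkK
        obtain ⟨i, S, hS, h1, h2, h3⟩ := exists_sorted_split N k (by omega) x
        have hx : x ∈ AS N γ i S := ⟨h1, h2, h3 ▸ hM k hkK⟩
        calc (1 : ℝ) = (AS N γ i S).indicator (fun _ => (1 : ℝ)) x := by
              rw [Set.indicator_of_mem hx]
          _ ≤ ∑ S ∈ (Finset.univ.erase i).powersetCard k,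
              (AS N γ i S).indicator (fun _ => (1 : ℝ)) x :=
            Finset.single_le_sum (f := fun S => (AS N γ i S).indicator (fun _ => (1 : ℝ)) x)
              (fun S _ => hnn i S) hS
          _ ≤ _ := Finset.single_le_sum
              (f := fun i => ∑ S ∈ (Finset.univ.erase i).powersetCard k,
                (AS N γ i S).indicator (fun _ => (1 : ℝ)) x)
              (fun i _ => Finset.sum_nonneg fun S _ => hnn i S) (Finset.mem_univ i)
    _ ≤ _ := Finset.sum_le_sum_of_subset_of_nonneg (Finset.range_mono hKN)
        fun k _ _ => Finset.sum_nonneg fun i _ => Finset.sum_nonneg fun S _ => hnn i S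

/-- Upper bound of Theorem 1 (integral form).  For the ordered sequential
estimation scheme, the expected number of transmissions satisfies
`E[k*] ≤ ∑_{k=0}^{N-1} [N!/((N-k-1)!(k!)²)] (1/(b-a))^N ∑_{j=0}^{k} (-1)^j C(k,j)
  ∫_a^b g_{k,j}(s)^k (s-a)^(N-k-1) (b-s)^k ds`,
where `g_{k,j}(s) = (max(min((γ - ks)/(b - s), k), 0) - j)₊`. -/
theorem stmt_16 (N : ℕ) (hN : 1 ≤ N) (a b : ℝ) (ha : 0 ≤ a) (hab : a < b)
    (γ : ℝ) (hγ : 0 < γ)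
    (P : Measure (Fin N → ℝ)) (hP : P = Measure.pi fun _ => unif a b)
    (kstar : (Fin N → ℝ) → ℕ)
    (hk : ∀ x, kstar x =
      if ∃ k, (1 ≤ k ∧ k ≤ N) ∧ γ ≤ sumKLargest N k x
      then sInf {k | (1 ≤ k ∧ k ≤ N) ∧ γ ≤ sumKLargest N k x}
      else N)
    (g : ℕ → ℕ → ℝ → ℝ)
    (hg : ∀ k j s, g k j s = max (max (min ((γ - k * s) / (b - s)) (k : ℝ)) 0 - j) 0) :
    ∫ x, (kstar x : ℝ) ∂P ≤
      ∑ k ∈ Finset.range N,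
        (N.factorial : ℝ) / (((N - k - 1).factorial : ℝ) * ((k.factorial : ℝ)) ^ 2) *
          (1 / (b - a)) ^ N *
          ∑ j ∈ Finset.range (k + 1), (-1 : ℝ) ^ j * (k.choose j : ℝ) *
            ∫ s in Set.Icc a b, (g k j s) ^ k * (s - a) ^ (N - k - 1) * (b - s) ^ k := by
  haveI : Fact (a < b) := ⟨hab⟩
  subst hP
  have hint : ∀ i S, Integrable ((AS N γ i S).indicator (fun _ => (1 : ℝ)))
      (Measure.pi fun _ : Fin N => unif a b) := fun i S =>
    (integrable_const 1).indicator (AS_meas N γ i S)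
  have hstep := integral_mono_of_nonneg (μ := Measure.pi fun _ : Fin N => unif a b)
    (f := fun x => (kstar x : ℝ)) (g := fun x => ∑ k ∈ Finset.range N, ∑ i : Fin N,
      ∑ S ∈ (Finset.univ.erase i).powersetCard k, (AS N γ i S).indicator (fun _ => (1 : ℝ)) x)
    (Filter.Eventually.of_forall fun x => by simp)
    (integrable_finsetSum _ fun k _ => integrable_finsetSum _ fun i _ =>
      integrable_finsetSum _ fun S _ => hint i S)
    (Filter.Eventually.of_forall fun x => kstar_le N γ hγ x (kstar x) (hk x))
  refine hstep.trans ?_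
  rw [integral_finsetSum _ fun k _ => integrable_finsetSum _ fun i _ =>
      integrable_finsetSum _ fun S _ => hint i S]
  refine Finset.sum_le_sum fun k hkN => ?_
  rw [Finset.mem_range] at hkN
  rw [integral_finsetSum _ fun i _ => integrable_finsetSum _ fun S _ => hint i S]
  simp_rw [hg]
  calc _ ≤ ∑ i : Fin N, ∑ S ∈ (Finset.univ.erase i).powersetCard k,
      ((1 / (k.factorial : ℝ)) * (1 / (b - a)) ^ N *
        ∑ j ∈ Finset.range (k + 1), (-1 : ℝ) ^ j * (k.choose j : ℝ) *
          ∫ s in Set.Icc a b, (max (max (min ((γ - k * s) / (b - s)) (k : ℝ)) 0 - j) 0) ^ k *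
            (s - a) ^ (N - k - 1) * (b - s) ^ k) := by
        refine Finset.sum_le_sum fun i _ => ?_
        rw [integral_finsetSum _ fun S _ => hint i S]
        refine Finset.sum_le_sum fun S hS => ?_
        rw [integral_indicator (AS_meas N γ i S)]
        simpa using AS_bound N k hkN γ a b i S hS
    _ = _ := by
        rw [← count_eq N k hkN]
        simp only [Finset.sum_const, Finset.card_powersetCard, Finset.card_univ, Fintype.card_fin,
          Finset.card_erase_of_mem (Finset.mem_univ _), nsmul_eq_mul]
        push_cast
        ring
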